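/- For all integers n ≥ 1, ν ≥ 1 and r ≥ 0, 𝓗^{(r)}_ν(0) = η_r; equivalently, ((−1)^{ν+1}/(r+ν))·(∂H^{(r+ν)}/∂y_ν)(𝔰_1,…,𝔰_{r+ν}) = η_r holds in ℚ[α_1,…,α_n]. -/

import Mathlib

/-!
Setting: in `MvPolynomial (Fin n) ℚ`, `esymm` is the elementary symmetric polynomial `𝔰_r`,
`hsymm` is the complete homogeneous symmetric polynomial `η_r`, and `psum` is the power sum
`p_r`.  The polynomial `H = H^{(r+ν)} ∈ ℚ[y₁,…,y_{r+ν}]` is characterized by the hypothesis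
that `p_{r+ν} = H(e₁,…,e_{r+ν})` holds in any number `N ≥ r+ν` of variables.
-/

noncomputable section

open MvPolynomial

namespace SQ

/-!
Write `E(t) = ∏ᵢ (1 - αᵢ t) = ∑ₖ (-1)ᵏ eₖ tᵏ`. Then `1 / E(t) = ∑ₖ hₖ tᵏ`, and Newton's identities
say `-(d/dt) log E(t) = ∑ₖ pₖ₊₁ tᵏ`. With arbitrarily many `αᵢ` the `eₖ` are algebraically
independent, so they may be treated as free variables. Mixed logarithmic derivatives are symmetric,
so `∂/∂e_ν` of `(d/dt) log E` is the `t`-derivative of `(∂E/∂e_ν) / E = (-1)^ν t^ν ∑ₖ hₖ tᵏ`;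
comparing coefficients of `t^(r+ν-1)` gives `∂p_{r+ν}/∂e_ν = (-1)^(ν+1) (r+ν) h_r`.
-/

open scoped PowerSeries
open Finset.HasAntidiagonal (antidiagonal)

section Derivation

variable {R S A : Type*} [CommRing R] [CommRing S] [CommRing A] [Algebra R A] [Algebra S A]

lemma derivation_logDeriv_comm (D₁ : Derivation R A A) (D₂ : Derivation S A A) {a b : A}
    (hab : a * b = 1) (hcomm : D₁ (D₂ a) = D₂ (D₁ a)) :
    D₁ (D₂ a * b) = D₂ (D₁ a * b) := by
  have hba : b * a = 1 := mul_comm a b ▸ hab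
  simp only [Derivation.leibniz, Derivation.leibniz_of_mul_eq_one _ hba, hcomm, smul_eq_mul]
  ring

/-- The derivation of `A⟦X⟧` that applies a derivation `D` of `A` to every coefficient. -/
def coeffwiseDerivation (D : Derivation R A A) : Derivation R A⟦X⟧ A⟦X⟧ :=
  Derivation.mk'
    { toFun := fun f => PowerSeries.mk fun k => D (PowerSeries.coeff k f)
      map_add' := fun f g => by ext k; simp
      map_smul' := fun c f => by ext k; simp }
    fun f g => by
      ext k
      simp only [LinearMap.coe_mk, AddHom.coe_mk, smul_eq_mul, mul_comm g, map_add, map_sum,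
        PowerSeries.coeff_mk, PowerSeries.coeff_mul, Derivation.leibniz, Finset.sum_add_distrib]
      simp only [mul_comm (PowerSeries.coeff _ g)]

@[simp]
lemma coeff_coeffwiseDerivation (D : Derivation R A A) (f : A⟦X⟧) (k : ℕ) :
    PowerSeries.coeff k (coeffwiseDerivation D f) = D (PowerSeries.coeff k f) :=
  PowerSeries.coeff_mk k fun j => D (PowerSeries.coeff j f)

lemma coeffwiseDerivation_derivative (D : Derivation R A A) (f : A⟦X⟧) :
    coeffwiseDerivation D (d⁄dX A f) = d⁄dX A (coeffwiseDerivation D f) := by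
  ext k
  have hD : D ((k : A) + 1) = 0 := by simp
  simp [PowerSeries.coeff_derivative, hD, mul_comm]

end Derivation

section PowerSeries

variable {A B : Type*} [CommRing A] [CommRing B]

lemma one_sub_C_mul_X_mul_mk_pow (a : A) :
    (1 - PowerSeries.C a * PowerSeries.X) * PowerSeries.mk (fun k => a ^ k) = 1 := by
  have h := congrArg (PowerSeries.rescale a) (PowerSeries.mk_one_mul_one_sub_eq_one A)
  simpa [PowerSeries.rescale_mk, PowerSeries.rescale_X, mul_comm] using h

lemma map_derivative (f : A →+* B) (g : A⟦X⟧) :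
    PowerSeries.map f (d⁄dX A g) = d⁄dX B (PowerSeries.map f g) := by
  ext k
  simp [PowerSeries.coeff_derivative]

end PowerSeries

section GeneratingSeries

variable (σ R : Type*) [Fintype σ] [CommRing R]

/-- The series `E(t) = ∑ₖ (-1)ᵏ eₖ tᵏ`, with signs chosen so that it is inverse to `hsymmSeries`. -/
def esymmSeries : (MvPolynomial σ R)⟦X⟧ :=
  PowerSeries.mk fun k => (-1) ^ k * esymm σ R k

/-- The generating series `∑ₖ hₖ tᵏ` of the complete homogeneous symmetric polynomials. -/
def hsymmSeries [DecidableEq σ] : (MvPolynomial σ R)⟦X⟧ :=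
  PowerSeries.mk (hsymm σ R)

/-- The series `∑ₖ pₖ₊₁ tᵏ` of power sums; the index is shifted so that it is minus the logarithmic
derivative of `esymmSeries`. -/
def psumSeries : (MvPolynomial σ R)⟦X⟧ :=
  PowerSeries.mk fun k => psum σ R (k + 1)

lemma esymmSeries_eq_prod :
    esymmSeries σ R = ∏ i : σ, (1 - PowerSeries.C (X i) * PowerSeries.X) := by
  have hcoeff (k : ℕ) (t : Finset σ) :
      PowerSeries.coeff k (∏ i ∈ t, -(PowerSeries.C (X i : MvPolynomial σ R) * PowerSeries.X))
        = if t.card = k then (-1) ^ k * ∏ i ∈ t, X i else 0 := by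
    have hprod : ∏ i ∈ t, -(PowerSeries.C (X i : MvPolynomial σ R) * PowerSeries.X)
        = PowerSeries.C ((-1) ^ t.card * ∏ i ∈ t, X i) * PowerSeries.X ^ t.card := by
      simp [Finset.prod_neg, Finset.prod_mul_distrib, mul_assoc]
    rw [hprod, PowerSeries.coeff_C_mul, PowerSeries.coeff_X_pow]
    rcases eq_or_ne t.card k with rfl | hk
    · simp
    · simp [hk, hk.symm]
  ext1 k
  simp only [sub_eq_add_neg, Finset.prod_one_add, map_sum, hcoeff, ← Finset.sum_filter,
    Finset.powerset_univ, Finset.univ_filter_card_eq, esymmSeries, PowerSeries.coeff_mk, esymm,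
    Finset.mul_sum]

lemma hsymm_eq_sum_finsuppAntidiag [DecidableEq σ] (k : ℕ) :
    hsymm σ R k = ∑ l ∈ Finset.univ.finsuppAntidiag k, ∏ i, X i ^ l i := by
  have hmem (l : σ →₀ ℕ) : l.sum (fun _ => id) = k ↔ l ∈ Finset.univ.finsuppAntidiag k := by
    simp [Finset.mem_finsuppAntidiag, Finsupp.sum_fintype]
  rw [← Finset.sum_coe_sort, hsymm]
  refine Fintype.sum_equiv ((Sym.equivNatSum σ k).trans
    (Equiv.subtypeEquivRight hmem)) _ _ fun s => ?_
  rw [Finset.prod_multiset_map_count]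
  simp only [Equiv.trans_apply, Equiv.subtypeEquivRight_apply_coe, Sym.coe_equivNatSum_apply_apply]
  refine Finset.prod_subset (Finset.subset_univ _) fun i _ hi => ?_
  rw [Multiset.count_eq_zero.2 (Multiset.mem_toFinset.not.1 hi), pow_zero]

lemma hsymmSeries_eq_prod [DecidableEq σ] :
    hsymmSeries σ R = ∏ i : σ, PowerSeries.mk (fun k => (X i : MvPolynomial σ R) ^ k) := by
  ext1 k
  simp only [hsymmSeries, PowerSeries.coeff_prod, PowerSeries.coeff_mk,
    hsymm_eq_sum_finsuppAntidiag]

lemma esymmSeries_mul_hsymmSeries [DecidableEq σ] : esymmSeries σ R * hsymmSeries σ R = 1 := by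
  rw [esymmSeries_eq_prod, hsymmSeries_eq_prod, ← Finset.prod_mul_distrib]
  exact Finset.prod_eq_one fun i _ => one_sub_C_mul_X_mul_mk_pow (X i)

lemma derivative_esymmSeries :
    d⁄dX _ (esymmSeries σ R) = -(esymmSeries σ R * psumSeries σ R) := by
  ext1 k
  have hnewton := mul_esymm_eq_sum σ R (k + 1)
  rw [Finset.sum_filter, Finset.Nat.sum_antidiagonal_succ', if_neg (lt_irrefl _), zero_add,
    Finset.sum_congr rfl fun a ha => if_pos (Finset.Nat.antidiagonal.fst_lt ha)] at hnewton
  have hsign : ((-1 : MvPolynomial σ R) ^ k) * (-1) ^ k = 1 := by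
    rw [← mul_pow, neg_one_mul, neg_neg, one_pow]
  simp only [esymmSeries, psumSeries, map_neg, PowerSeries.coeff_derivative, PowerSeries.coeff_mul,
    PowerSeries.coeff_mk]
  push_cast at hnewton
  linear_combination (-1) ^ (k + 1) * hnewton - (∑ a ∈ antidiagonal k,
    (-1) ^ a.1 * esymm σ R a.1 * psum σ R (a.2 + 1)) * hsign

end GeneratingSeries

section Universal

variable (R : Type*) [CommRing R]

/-- The series `E(t)` with independent variables `X k` in place of `e_{k+1}`. -/
def genericESeries : (MvPolynomial ℕ R)⟦X⟧ :=
  PowerSeries.mk fun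
    | 0 => 1
    | k + 1 => (-1) ^ (k + 1) * X k

/-- The inverse of `genericESeries`; its coefficients express the `hₖ` through the `eₖ`. -/
def genericHSeries : (MvPolynomial ℕ R)⟦X⟧ :=
  PowerSeries.invOfUnit (genericESeries R) 1

/-- Minus the logarithmic derivative of `genericESeries`; its coefficients express the `pₖ₊₁`
through the `eₖ`. -/
def genericPSeries : (MvPolynomial ℕ R)⟦X⟧ :=
  -(d⁄dX _ (genericESeries R) * genericHSeries R)

lemma genericESeries_mul_genericHSeries : genericESeries R * genericHSeries R = 1 :=
  PowerSeries.mul_invOfUnit _ _ (by simp [genericESeries])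

lemma coeffwiseDerivation_pderiv_genericESeries (i : ℕ) :
    coeffwiseDerivation (pderiv i) (genericESeries R)
      = PowerSeries.C ((-1) ^ (i + 1)) * PowerSeries.X ^ (i + 1) := by
  ext1 k
  rw [coeff_coeffwiseDerivation, PowerSeries.coeff_C_mul, PowerSeries.coeff_X_pow]
  rcases k with _ | k
  · simp [genericESeries]
  · rcases eq_or_ne i k with rfl | hik
    · simp [genericESeries]
    · simp [genericESeries, hik.symm]

lemma pderiv_coeff_genericPSeries (i r : ℕ) :
    pderiv i (PowerSeries.coeff (r + i) (genericPSeries R))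
      = (-1) ^ i * ((r + i + 1 : ℕ) : MvPolynomial ℕ R)
        * PowerSeries.coeff r (genericHSeries R) := by
  have hlog : coeffwiseDerivation (pderiv i) (genericPSeries R)
      = -d⁄dX _ (PowerSeries.C ((-1) ^ (i + 1)) * PowerSeries.X ^ (i + 1)
          * genericHSeries R) := by
    rw [genericPSeries, map_neg, derivation_logDeriv_comm _ _
      (genericESeries_mul_genericHSeries R) (coeffwiseDerivation_derivative _ _),
      coeffwiseDerivation_pderiv_genericESeries]
  have hcoeff := congrArg (PowerSeries.coeff (r + i)) hlog
  rw [coeff_coeffwiseDerivation, map_neg, PowerSeries.coeff_derivative, mul_assoc,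
    PowerSeries.coeff_C_mul, add_assoc r i 1, PowerSeries.coeff_X_pow_mul] at hcoeff
  rw [hcoeff]
  push_cast
  ring

variable (σ : Type*) [Fintype σ]

/-- The specialization sending the variable `X k` of the generic series to `e_{k+1}` in the
variables `σ`. -/
def esymmEval : MvPolynomial ℕ R →ₐ[R] MvPolynomial σ R :=
  aeval fun k => esymm σ R (k + 1)

lemma map_esymmEval_genericESeries :
    PowerSeries.map (esymmEval R σ) (genericESeries R) = esymmSeries σ R := by
  ext1 k
  cases k <;> simp [esymmEval, genericESeries, esymmSeries]

lemma map_esymmEval_genericHSeries [DecidableEq σ] :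
    PowerSeries.map (esymmEval R σ) (genericHSeries R) = hsymmSeries σ R := by
  have h := congrArg (PowerSeries.map (esymmEval R σ : MvPolynomial ℕ R →+* MvPolynomial σ R))
    (genericESeries_mul_genericHSeries R)
  rw [map_mul, map_esymmEval_genericESeries, map_one] at h
  have hleft : hsymmSeries σ R * esymmSeries σ R = 1 := by
    rw [mul_comm, esymmSeries_mul_hsymmSeries]
  exact (left_inv_eq_right_inv hleft h).symm

lemma map_esymmEval_genericPSeries :
    PowerSeries.map (esymmEval R σ) (genericPSeries R) = psumSeries σ R := by
  classical
  rw [genericPSeries, map_neg, map_mul, map_derivative, map_esymmEval_genericESeries,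
    map_esymmEval_genericHSeries, derivative_esymmSeries]
  linear_combination psumSeries σ R * esymmSeries_mul_hsymmSeries σ R

lemma esymmEval_coeff_genericHSeries [DecidableEq σ] (k : ℕ) :
    esymmEval R σ (PowerSeries.coeff k (genericHSeries R)) = hsymm σ R k := by
  simpa [hsymmSeries] using congrArg (PowerSeries.coeff k) (map_esymmEval_genericHSeries R σ)

lemma esymmEval_coeff_genericPSeries (k : ℕ) :
    esymmEval R σ (PowerSeries.coeff k (genericPSeries R)) = psum σ R (k + 1) := by
  simpa [psumSeries] using congrArg (PowerSeries.coeff k) (map_esymmEval_genericPSeries R σ)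

lemma esymmEval_rename_val {m : ℕ} (f : MvPolynomial (Fin m) R) :
    esymmEval R σ (rename Fin.val f) = aeval (fun j : Fin m => esymm σ R (j + 1)) f :=
  aeval_rename _ _ _

variable {R}

lemma eq_of_eventually_esymmEval_eq {f g : MvPolynomial ℕ R}
    (h : ∀ᶠ N in Filter.atTop, esymmEval R (Fin N) f = esymmEval R (Fin N) g) : f = g := by
  have hvars (p : MvPolynomial ℕ R) :
      ∀ᶠ N in Filter.atTop, ∃ q : MvPolynomial (Fin N) R, rename Fin.val q = p := by
    filter_upwards [Filter.eventually_gt_atTop (p.vars.sup id)] with N hN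
    refine exists_rename_eq_of_vars_subset_range p Fin.val Fin.val_injective fun i hi => ?_
    exact ⟨⟨i, (Finset.le_sup (f := id) hi).trans_lt hN⟩, rfl⟩
  obtain ⟨N, hN, ⟨f, rfl⟩, g, rfl⟩ := (h.and ((hvars f).and (hvars g))).exists
  rw [esymmEval_rename_val, esymmEval_rename_val] at hN
  have hfg : f = g := esymmAlgHom_fin_injective R le_rfl <| Subtype.ext <| by
    simpa only [esymmAlgHom_apply] using hN
  rw [hfg]

end Universal

theorem statement7_general {σ R : Type*} [Fintype σ] [DecidableEq σ] [CommRing R] (ν r : ℕ)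
    (hν : 1 ≤ ν) (H : MvPolynomial (Fin (r + ν)) R)
    (hH : ∀ N : ℕ, r + ν ≤ N →
        aeval (fun j : Fin (r + ν) => esymm (Fin N) R ((j : ℕ) + 1)) H = psum (Fin N) R (r + ν)) :
    aeval (fun k : Fin (r + ν) => esymm σ R ((k : ℕ) + 1))
        (pderiv (⟨ν - 1, by omega⟩ : Fin (r + ν)) H)
      = C ((-1) ^ (ν + 1) * ((r + ν : ℕ) : R)) * hsymm σ R r := by
  obtain ⟨i, rfl⟩ : ∃ i, ν = i + 1 := ⟨ν - 1, by omega⟩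
  have hgeneric : rename Fin.val H = PowerSeries.coeff (r + i) (genericPSeries R) := by
    refine eq_of_eventually_esymmEval_eq ((Filter.eventually_ge_atTop (r + (i + 1))).mono ?_)
    intro N hN
    rw [esymmEval_rename_val, hH N hN, esymmEval_coeff_genericPSeries, add_assoc]
  rw [← esymmEval_rename_val, ← pderiv_rename Fin.val_injective, hgeneric]
  change esymmEval R σ (pderiv i _) = _
  rw [pderiv_coeff_genericPSeries, map_mul, esymmEval_coeff_genericHSeries]
  simp [pow_succ, add_assoc]

/-- for `ν ≥ 1` and `r ≥ 0`, `𝓗^{(r)}_ν(0) = η_r`, in the explicit form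
`((−1)^{ν+1}/(r+ν))·(∂H^{(r+ν)}/∂y_ν)(𝔰₁,…,𝔰_{r+ν}) = η_r` in `ℚ[α₁,…,αₙ]`.
(The variable `y_ν` corresponds to the index `ν−1 : Fin (r+ν)`.) -/
theorem statement7 (n : ℕ) (hn : 1 ≤ n) (ν r : ℕ) (hν : 1 ≤ ν)
    (H : MvPolynomial (Fin (r + ν)) ℚ)
    (hH : ∀ N : ℕ, r + ν ≤ N →
        MvPolynomial.aeval (fun j : Fin (r + ν) => esymm (Fin N) ℚ ((j : ℕ) + 1)) H
          = psum (Fin N) ℚ (r + ν)) :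
    C ((-1 : ℚ) ^ (ν + 1) / ((r + ν : ℕ) : ℚ))
        * MvPolynomial.aeval (fun k : Fin (r + ν) => esymm (Fin n) ℚ ((k : ℕ) + 1))
            (pderiv (⟨ν - 1, by omega⟩ : Fin (r + ν)) H)
      = hsymm (Fin n) ℚ r := by
  have hcancel : (-1 : ℚ) ^ (ν + 1) / (r + ν : ℕ) * ((-1) ^ (ν + 1) * (r + ν : ℕ)) = 1 := by
    rw [mul_left_comm, div_mul_cancel₀ _ (by positivity), ← mul_pow, neg_one_mul, neg_neg, one_pow]
  rw [statement7_general ν r hν H hH, ← mul_assoc, ← C_mul, hcancel, C_1, one_mul]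

end SQ
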